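/- (Davydov's covariance inequality) Let $\{\xi_t\}$ be a stationary process with $\alpha$-mixing coefficients $\alpha(k)$. Fix an integer $k \ge 1$, and let $\xi$ be measurable with respect to $\sigma(\ldots, \xi_{-1}, \xi_0)$ and $\eta$ measurable with respect to $\sigma(\xi_k, \xi_{k+1}, \ldots)$ with $\mathbb{E}|\xi|^q < \infty$, $\mathbb{E}|\eta|^r < \infty$ for $q, r > 1$ with $1/q + 1/r < 1$. Then $|\mathbb{E}[\xi\eta] - \mathbb{E}[\xi]\mathbb{E}[\eta]| \le 12 (\mathbb{E}|\xi|^q)^{1/q}(\mathbb{E}|\eta|^r)^{1/r} \alpha(k)^{1 - 1/q - 1/r}$. -/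

import Mathlib

open MeasureTheory ProbabilityTheory Filter

/-!
Cut `f` and `g` at the levels `‖f‖_p a^(-1/p)` and `‖g‖_q a^(-1/q)`. By Markov's inequality the
events where the levels are exceeded have probability at most `a`, so by Hölder's inequality the
parts of `f` and `g` living there contribute at most `2 ‖f‖_p ‖g‖_q a^(1-1/p-1/q)` each. The
remaining parts are bounded. If `|f| ≤ M` and `f` is `m₁`-measurable then
`cov(f, g) = cov(f, E[g|m₁])`, and `|cov(f, h)| ≤ M E|h - Eh| = 2 M cov(1_{h ≥ Eh}, h)`; doing this
on both sides replaces bounded functions by indicators, whose covariance is at most `a` by mixing.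
-/

section LpNorm

variable {Ω E : Type*} [MeasurableSpace Ω] {μ : Measure Ω} [NormedAddCommGroup E] {p q : ENNReal}
  {f : Ω → E}

lemma lpNorm_le_lpNorm_of_exponent_le [IsProbabilityMeasure μ] (hpq : p ≤ q) (hf : MemLp f q μ) :
    lpNorm f p μ ≤ lpNorm f q μ := by
  rw [← toReal_eLpNorm hf.1, ← toReal_eLpNorm hf.1]
  exact ENNReal.toReal_mono hf.eLpNorm_ne_top (eLpNorm_le_eLpNorm_of_exponent_le hpq hf.1)

lemma lpNorm_indicator_le {S : Set Ω} (hS : MeasurableSet S) (hf : MemLp f p μ) :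
    lpNorm (S.indicator f) p μ ≤ lpNorm f p μ := by
  rw [← toReal_eLpNorm (hf.indicator hS).1, ← toReal_eLpNorm hf.1]
  exact ENNReal.toReal_mono hf.eLpNorm_ne_top (eLpNorm_indicator_le f)

lemma one_sub_inv_toReal_nonneg (hp : 1 ≤ p) : 0 ≤ 1 - p.toReal⁻¹ := by
  have h_inv : p⁻¹.toReal ≤ 1 := ENNReal.toReal_le_of_le_ofReal zero_le_one (by simpa using hp)
  rwa [ENNReal.toReal_inv, ← sub_nonneg] at h_inv

lemma setIntegral_norm_le_lpNorm_mul_rpow [IsFiniteMeasure μ] (hp : 1 ≤ p) (hf : MemLp f p μ)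
    (S : Set Ω) :
    ∫ ω in S, ‖f ω‖ ∂μ ≤ lpNorm f p μ * μ.real S ^ (1 - p.toReal⁻¹) := by
  have h_holder : eLpNorm f 1 (μ.restrict S) ≤ eLpNorm f p μ * μ S ^ (1 - p.toReal⁻¹) := calc
    eLpNorm f 1 (μ.restrict S)
      ≤ eLpNorm f p (μ.restrict S) * μ S ^ (1 - p.toReal⁻¹) := by
        simpa using eLpNorm_le_eLpNorm_mul_rpow_measure_univ hp hf.1.restrict
    _ ≤ eLpNorm f p μ * μ S ^ (1 - p.toReal⁻¹) := by
        gcongr; exact Measure.restrict_le_self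
  rw [← lpNorm_one_eq_integral_norm hf.1.restrict, ← toReal_eLpNorm hf.1.restrict,
    ← toReal_eLpNorm hf.1, measureReal_def, ENNReal.toReal_rpow, ← ENNReal.toReal_mul]
  refine ENNReal.toReal_mono (ENNReal.mul_ne_top hf.eLpNorm_ne_top ?_) h_holder
  exact ENNReal.rpow_ne_top_of_nonneg (one_sub_inv_toReal_nonneg hp) (measure_ne_top μ S)

lemma rpow_mul_measureReal_le_norm_le (hp₀ : p ≠ 0) (hp : p ≠ ⊤) (hf : MemLp f p μ) {M : ℝ}
    (hM : 0 ≤ M) :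
    M ^ p.toReal * μ.real {ω | M ≤ ‖f ω‖} ≤ lpNorm f p μ ^ p.toReal := by
  have markov := mul_meas_ge_le_pow_eLpNorm' μ hp₀ hp hf.1 (ENNReal.ofReal M)
  have h_top : eLpNorm f p μ ^ p.toReal ≠ ⊤ :=
    ENNReal.rpow_ne_top_of_nonneg ENNReal.toReal_nonneg hf.eLpNorm_ne_top
  simpa [← toReal_eLpNorm hf.1, measureReal_def, ENNReal.toReal_rpow, hM, ← ofReal_norm,
    ENNReal.ofReal_le_ofReal_iff, ← ENNReal.toReal_rpow] using ENNReal.toReal_mono h_top markov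

lemma measureReal_lpNorm_mul_rpow_lt_norm_le [IsFiniteMeasure μ] (hp₀ : p ≠ 0) (hf : MemLp f p μ)
    {a : ℝ} (ha : 0 < a) :
    μ.real {ω | lpNorm f p μ * a ^ (-p.toReal⁻¹) < ‖f ω‖} ≤ a := by
  rcases eq_or_ne p ⊤ with rfl | hp
  · have h_null : μ.real {ω | lpNorm f ⊤ μ < ‖f ω‖} = 0 := by
      rw [measureReal_eq_zero_iff]
      simpa [ae_iff] using ae_le_lpNorm_exponent_top hf
    simpa [h_null] using ha.le
  rcases (lpNorm_nonneg (f := f) (p := p) (μ := μ)).eq_or_lt' with h_zero | h_pos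
  · have h_null : μ.real {ω | 0 < ‖f ω‖} = 0 := by
      rw [measureReal_eq_zero_iff]
      simpa [ae_iff, EventuallyEq] using (lpNorm_eq_zero hf hp₀).mp h_zero
    simpa only [h_zero, zero_mul, h_null] using ha.le
  set M := lpNorm f p μ * a ^ (-p.toReal⁻¹) with hM
  have h_pow : M ^ p.toReal = lpNorm f p μ ^ p.toReal * a⁻¹ := by
    have hp' : p.toReal ≠ 0 := (ENNReal.toReal_pos hp₀ hp).ne'
    rw [hM, Real.mul_rpow h_pos.le (by positivity), ← Real.rpow_mul ha.le, neg_mul,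
      inv_mul_cancel₀ hp', Real.rpow_neg_one]
  have markov := rpow_mul_measureReal_le_norm_le hp₀ hp hf (M := M) (by positivity)
  calc μ.real {ω | M < ‖f ω‖}
    _ ≤ μ.real {ω | M ≤ ‖f ω‖} := measureReal_mono fun ω (hω : M < ‖f ω‖) ↦ hω.le
    _ ≤ a := by
        rw [h_pow, mul_assoc] at markov
        have := (mul_le_iff_le_one_right (by positivity)).mp markov
        rwa [inv_mul_le_iff₀ ha, mul_one] at this

end LpNorm

section RealExponent

variable {Ω : Type*} [MeasurableSpace Ω] {μ : Measure Ω} {f : Ω → ℝ} {q : ℝ}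

lemma memLp_ofReal_of_integrable_abs_rpow (hq : 0 < q) (hf : AEStronglyMeasurable f μ)
    (hfq : Integrable (fun ω ↦ |f ω| ^ q) μ) : MemLp f (ENNReal.ofReal q) μ := by
  rw [← integrable_norm_rpow_iff hf (by simpa) ENNReal.ofReal_ne_top, ENNReal.toReal_ofReal hq.le]
  exact hfq

lemma lpNorm_ofReal_eq_integral_abs_rpow (hq : 0 < q) (hf : AEStronglyMeasurable f μ) :
    lpNorm f (ENNReal.ofReal q) μ = (∫ ω, |f ω| ^ q ∂μ) ^ (1 / q) := by
  rw [lpNorm_eq_integral_norm_rpow_toReal (by simpa) ENNReal.ofReal_ne_top hf,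
    ENNReal.toReal_ofReal hq.le, one_div]
  rfl

end RealExponent

section HolderTriple

variable {Ω : Type*} [MeasurableSpace Ω] {μ : Measure Ω} {p q s : ENNReal} {f g : Ω → ℝ}

lemma inv_toReal_add_inv_toReal_of_holderTriple [p.HolderTriple q s] (hs : 1 ≤ s) :
    p.toReal⁻¹ + q.toReal⁻¹ = s.toReal⁻¹ := by
  have hp : p ≠ 0 := (zero_lt_one.trans_le (hs.trans (ENNReal.HolderTriple.le p q s))).ne'
  have hq : q ≠ 0 := (zero_lt_one.trans_le (hs.trans (ENNReal.HolderTriple.le q p s))).ne'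
  simp only [← ENNReal.toReal_inv]
  rw [← ENNReal.toReal_add (by simpa) (by simpa), ENNReal.HolderTriple.inv_add_inv_eq_inv p q s]

lemma integrable_mul_of_holderTriple [IsFiniteMeasure μ] [p.HolderTriple q s] (hs : 1 ≤ s)
    (hf : MemLp f p μ) (hg : MemLp g q μ) : Integrable (fun ω ↦ f ω * g ω) μ :=
  (MemLp.mul (r := s) hg hf).integrable hs

lemma lpNorm_mul_le [p.HolderTriple q s] (hf : MemLp f p μ) (hg : MemLp g q μ) :
    lpNorm (fun ω ↦ f ω * g ω) s μ ≤ lpNorm f p μ * lpNorm g q μ := by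
  have h_prod : MemLp (fun ω ↦ f ω * g ω) s μ := hg.mul hf
  have holder : eLpNorm (f • g) s μ ≤ eLpNorm f p μ * eLpNorm g q μ :=
    eLpNorm_smul_le_mul_eLpNorm hg.1 hf.1
  rw [← toReal_eLpNorm h_prod.1,
    ← toReal_eLpNorm hf.1, ← toReal_eLpNorm hg.1, ← ENNReal.toReal_mul]
  exact ENNReal.toReal_mono (ENNReal.mul_ne_top hf.eLpNorm_ne_top hg.eLpNorm_ne_top) holder

end HolderTriple

section Covariance

variable {Ω : Type*} {m mΩ : MeasurableSpace Ω} {μ : Measure Ω} {f g : Ω → ℝ}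

lemma integral_abs_eq_two_mul_setIntegral_nonneg (hf : Measurable f) (hfi : Integrable f μ)
    (hf₀ : ∫ ω, f ω ∂μ = 0) :
    ∫ ω, |f ω| ∂μ = 2 * ∫ ω in {ω | 0 ≤ f ω}, f ω ∂μ := by
  have hP : MeasurableSet {ω | 0 ≤ f ω} := measurableSet_le measurable_const hf
  have h_abs : ∫ ω, |f ω| ∂μ
      = ∫ ω in {ω | 0 ≤ f ω}, f ω ∂μ + ∫ ω in {ω | 0 ≤ f ω}ᶜ, -f ω ∂μ := by
    rw [← integral_add_compl hP hfi.abs]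
    congr 1
    · exact setIntegral_congr_fun hP fun ω hω ↦ abs_of_nonneg hω
    · exact setIntegral_congr_fun hP.compl fun ω hω ↦ abs_of_neg (not_le.mp hω)
  have h_split := integral_add_compl hP hfi
  rw [h_abs, integral_neg]
  linarith

lemma abs_indicator_compl_lt_abs_le {M : ℝ} (hM : 0 ≤ M) (ω : Ω) :
    |{ω | M < |f ω|}ᶜ.indicator f ω| ≤ M := by
  by_cases hω : M < |f ω|
  · simpa [hω] using hM
  · simpa [hω] using le_of_not_gt hω

variable [IsProbabilityMeasure μ]

lemma covariance_eq_integral_mul_center (hg : Integrable g μ)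
    (hfg : Integrable (fun ω ↦ f ω * (g ω - μ[g])) μ) :
    cov[f, g; μ] = ∫ ω, f ω * (g ω - μ[g]) ∂μ := by
  have hg₀ : ∫ ω, (g ω - μ[g]) ∂μ = 0 := by simp [integral_sub hg]
  have h_const : Integrable (fun ω ↦ μ[f] * (g ω - μ[g])) μ :=
    (hg.sub (integrable_const _)).const_mul _
  simp_rw [covariance, sub_mul]
  rw [integral_sub hfg h_const, integral_const_mul, hg₀, mul_zero, sub_zero]

lemma covariance_eq_integral_mul_sub (hf : Integrable f μ) (hg : Integrable g μ)
    (hfg : Integrable (fun ω ↦ f ω * g ω) μ) :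
    cov[f, g; μ] = ∫ ω, f ω * g ω ∂μ - (∫ ω, f ω ∂μ) * ∫ ω, g ω ∂μ := by
  have h_center : Integrable (fun ω ↦ f ω * g ω - f ω * μ[g]) μ := hfg.sub (hf.mul_const _)
  rw [covariance_eq_integral_mul_center hg (by simpa only [mul_sub] using h_center)]
  simp_rw [mul_sub]
  rw [integral_sub hfg (hf.mul_const _), integral_mul_const]

lemma covariance_condExp_right (hm : m ≤ mΩ) (hfm : Measurable[m] f) (hf : Integrable f μ)
    (hg : Integrable g μ) (hfg : Integrable (fun ω ↦ f ω * g ω) μ) :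
    cov[f, μ[g|m]; μ] = cov[f, g; μ] := by
  have pull_out : μ[fun ω ↦ f ω * g ω|m] =ᵐ[μ] fun ω ↦ f ω * μ[g|m] ω :=
    condExp_mul_of_stronglyMeasurable_left hfm.stronglyMeasurable hfg hg
  have h_int : ∫ ω, f ω * μ[g|m] ω ∂μ = ∫ ω, f ω * g ω ∂μ :=
    (integral_congr_ae pull_out.symm).trans (integral_condExp hm)
  rw [covariance_eq_integral_mul_sub hf integrable_condExp (integrable_condExp.congr pull_out),
    covariance_eq_integral_mul_sub hf hg hfg, h_int, integral_condExp hm]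

lemma covariance_indicator_one_left {A : Set Ω} (hA : MeasurableSet A) (hg : Integrable g μ) :
    cov[A.indicator 1, g; μ] = ∫ ω in A, (g ω - μ[g]) ∂μ := by
  have h_mul : (fun ω ↦ A.indicator 1 ω * (g ω - μ[g])) = A.indicator fun ω ↦ g ω - μ[g] := by
    ext ω; by_cases hω : ω ∈ A <;> simp [hω]
  rw [covariance_eq_integral_mul_center hg, h_mul, integral_indicator hA]
  exact h_mul ▸ (hg.sub (integrable_const _)).indicator hA

lemma covariance_indicator_one_indicator_one {A B : Set Ω} (hA : MeasurableSet A)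
    (hB : MeasurableSet B) :
    cov[A.indicator 1, B.indicator 1; μ] = μ.real (A ∩ B) - μ.real A * μ.real B := by
  have hB_int : Integrable (B.indicator (1 : Ω → ℝ)) μ := (integrable_const 1).indicator hB
  rw [covariance_indicator_one_left hA hB_int,
    integral_sub hB_int.integrableOn (integrable_const _), setIntegral_indicator hB,
    integral_indicator_one hB]
  simp

lemma abs_covariance_le_mul_covariance_indicator {M : ℝ} (hf : Measurable f)
    (hM : ∀ ω, |f ω| ≤ M) (hg : Measurable g) (hgi : Integrable g μ) :
    |cov[f, g; μ]| ≤ 2 * M * cov[{ω | μ[g] ≤ g ω}.indicator 1, g; μ] := by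
  have h_center : Integrable (fun ω ↦ g ω - μ[g]) μ := hgi.sub (integrable_const _)
  have h_mul : Integrable (fun ω ↦ f ω * (g ω - μ[g])) μ :=
    h_center.bdd_mul hf.aestronglyMeasurable (.of_forall hM)
  have h_mean : ∫ ω, (g ω - μ[g]) ∂μ = 0 := by simp [integral_sub hgi]
  calc |cov[f, g; μ]|
    _ = |∫ ω, f ω * (g ω - μ[g]) ∂μ| := by rw [covariance_eq_integral_mul_center hgi h_mul]
    _ ≤ ∫ ω, |f ω * (g ω - μ[g])| ∂μ := abs_integral_le_integral_abs
    _ ≤ ∫ ω, M * |g ω - μ[g]| ∂μ := by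
        refine integral_mono h_mul.abs (h_center.abs.const_mul M) fun ω ↦ ?_
        simp only [abs_mul]
        gcongr
        exact hM ω
    _ = 2 * M * ∫ ω in {ω | μ[g] ≤ g ω}, (g ω - μ[g]) ∂μ := by
        rw [integral_const_mul, integral_abs_eq_two_mul_setIntegral_nonneg (hg.sub_const _) h_center
          h_mean]
        simp only [sub_nonneg]
        ring
    _ = 2 * M * cov[{ω | μ[g] ≤ g ω}.indicator 1, g; μ] := by
        rw [covariance_indicator_one_left (measurableSet_le measurable_const hg) hgi]

lemma exists_abs_covariance_le_mul_covariance_indicator (hm : m ≤ mΩ) {M : ℝ}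
    (hf : Measurable[m] f) (hM : ∀ ω, |f ω| ≤ M) (hg : Integrable g μ) :
    ∃ A, MeasurableSet[m] A ∧ |cov[f, g; μ]| ≤ 2 * M * cov[A.indicator 1, g; μ] := by
  have h_condExp {h : Ω → ℝ} {K : ℝ} (hh : Measurable[m] h) (hK : ∀ ω, |h ω| ≤ K) :
      cov[h, μ[g|m]; μ] = cov[h, g; μ] := by
    have hh' : AEStronglyMeasurable h μ := (hh.mono hm le_rfl).aestronglyMeasurable
    exact covariance_condExp_right hm hh (.of_bound hh' K (.of_forall hK)) hg
      (hg.bdd_mul hh' (.of_forall hK))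
  have hE : Measurable[m] μ[g|m] := stronglyMeasurable_condExp.measurable
  set A := {ω | μ[μ[g|m]] ≤ μ[g|m] ω}
  have hA : MeasurableSet[m] A := measurableSet_le measurable_const hE
  have hA_one : Measurable[m] (A.indicator (1 : Ω → ℝ)) := measurable_const.indicator hA
  have hA_le (ω : Ω) : |A.indicator (1 : Ω → ℝ) ω| ≤ 1 := by
    by_cases hω : ω ∈ A <;> simp [hω]
  refine ⟨A, hA, ?_⟩
  rw [← h_condExp hf hM, ← h_condExp hA_one hA_le]
  exact abs_covariance_le_mul_covariance_indicator (hf.mono hm le_rfl) hM (hE.mono hm le_rfl)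
    integrable_condExp

variable {p q s : ENNReal} [p.HolderTriple q s] {S T : Set Ω}

lemma covariance_eq_integral_mul_sub_of_holderTriple (hs : 1 ≤ s) (hf : MemLp f p μ)
    (hg : MemLp g q μ) :
    cov[f, g; μ] = ∫ ω, f ω * g ω ∂μ - (∫ ω, f ω ∂μ) * ∫ ω, g ω ∂μ :=
  covariance_eq_integral_mul_sub
    (hf.integrable (hs.trans (ENNReal.HolderTriple.le p q s)))
    (hg.integrable (hs.trans (ENNReal.HolderTriple.le q p s)))
    (integrable_mul_of_holderTriple hs hf hg)

lemma covariance_indicator_add_compl (hs : 1 ≤ s) (hS : MeasurableSet S) (hf : MemLp f p μ)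
    (hg : MemLp g q μ) :
    cov[f, g; μ] = cov[S.indicator f, g; μ] + cov[Sᶜ.indicator f, g; μ] := by
  have hp : 1 ≤ p := hs.trans (ENNReal.HolderTriple.le p q s)
  have hfS := hf.indicator hS
  have hfS' := hf.indicator hS.compl
  have h_int : ∫ ω, S.indicator f ω ∂μ + ∫ ω, Sᶜ.indicator f ω ∂μ = ∫ ω, f ω ∂μ := by
    rw [← integral_add (hfS.integrable hp) (hfS'.integrable hp)]
    simp_rw [Set.indicator_self_add_compl_apply]
  have h_mul : ∫ ω, S.indicator f ω * g ω ∂μ + ∫ ω, Sᶜ.indicator f ω * g ω ∂μ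
      = ∫ ω, f ω * g ω ∂μ := by
    rw [← integral_add (integrable_mul_of_holderTriple hs hfS hg)
      (integrable_mul_of_holderTriple hs hfS' hg)]
    simp_rw [← add_mul, Set.indicator_self_add_compl_apply]
  rw [covariance_eq_integral_mul_sub_of_holderTriple hs hf hg,
    covariance_eq_integral_mul_sub_of_holderTriple hs hfS hg,
    covariance_eq_integral_mul_sub_of_holderTriple hs hfS' hg, ← h_int, ← h_mul]
  ring

lemma covariance_eq_indicator_add_indicator_add_compl (hs : 1 ≤ s) (hS : MeasurableSet S)
    (hT : MeasurableSet T) (hf : MemLp f p μ) (hg : MemLp g q μ) :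
    cov[f, g; μ] = cov[S.indicator f, g; μ] + cov[T.indicator g, Sᶜ.indicator f; μ]
      + cov[Sᶜ.indicator f, Tᶜ.indicator g; μ] := by
  have : q.HolderTriple p s := .symm
  rw [covariance_indicator_add_compl hs hS hf hg, covariance_comm (Sᶜ.indicator f) g,
    covariance_indicator_add_compl hs hT hg (hf.indicator hS.compl),
    covariance_comm (Tᶜ.indicator g), add_assoc]

lemma abs_covariance_indicator_le (hs : 1 ≤ s) (hS : MeasurableSet S) (hf : MemLp f p μ)
    (hg : MemLp g q μ) :
    |cov[S.indicator f, g; μ]|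
      ≤ 2 * (lpNorm f p μ * lpNorm g q μ) * μ.real S ^ (1 - s.toReal⁻¹) := by
  have hsp : s ≤ p := ENNReal.HolderTriple.le p q s
  have hq : 1 ≤ q := hs.trans (ENNReal.HolderTriple.le q p s)
  have hfs : MemLp f s μ := hf.mono_exponent hsp
  have h_mul : (fun ω ↦ S.indicator f ω * g ω) = S.indicator fun ω ↦ f ω * g ω := by
    ext ω; by_cases hω : ω ∈ S <;> simp [hω]
  have h_cov : cov[S.indicator f, g; μ]
      = ∫ ω in S, f ω * g ω ∂μ - (∫ ω in S, f ω ∂μ) * ∫ ω, g ω ∂μ := by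
    rw [covariance_eq_integral_mul_sub_of_holderTriple hs (hf.indicator hS) hg, h_mul,
      integral_indicator hS, integral_indicator hS]
  have h_prod : |∫ ω in S, f ω * g ω ∂μ|
      ≤ lpNorm f p μ * lpNorm g q μ * μ.real S ^ (1 - s.toReal⁻¹) := calc
    |∫ ω in S, f ω * g ω ∂μ| ≤ ∫ ω in S, |f ω * g ω| ∂μ := abs_integral_le_integral_abs
    _ ≤ lpNorm (fun ω ↦ f ω * g ω) s μ * μ.real S ^ (1 - s.toReal⁻¹) :=
        setIntegral_norm_le_lpNorm_mul_rpow hs (MemLp.mul hg hf) S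
    _ ≤ lpNorm f p μ * lpNorm g q μ * μ.real S ^ (1 - s.toReal⁻¹) := by
        gcongr
        exact lpNorm_mul_le hf hg
  have h_left : |∫ ω in S, f ω ∂μ| ≤ lpNorm f p μ * μ.real S ^ (1 - s.toReal⁻¹) := calc
    |∫ ω in S, f ω ∂μ| ≤ ∫ ω in S, |f ω| ∂μ := abs_integral_le_integral_abs
    _ ≤ lpNorm f s μ * μ.real S ^ (1 - s.toReal⁻¹) := setIntegral_norm_le_lpNorm_mul_rpow hs hfs S
    _ ≤ lpNorm f p μ * μ.real S ^ (1 - s.toReal⁻¹) := by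
        gcongr
        exact lpNorm_le_lpNorm_of_exponent_le hsp hf
  have h_right : |∫ ω, g ω ∂μ| ≤ lpNorm g q μ := calc
    |∫ ω, g ω ∂μ| ≤ ∫ ω, |g ω| ∂μ := abs_integral_le_integral_abs
    _ = lpNorm g 1 μ := (lpNorm_one_eq_integral_norm hg.1).symm
    _ ≤ lpNorm g q μ := lpNorm_le_lpNorm_of_exponent_le hq hg
  calc |cov[S.indicator f, g; μ]|
    _ ≤ |∫ ω in S, f ω * g ω ∂μ| + |∫ ω in S, f ω ∂μ| * |∫ ω, g ω ∂μ| := by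
        rw [h_cov, ← abs_mul]
        exact abs_sub _ _
    _ ≤ lpNorm f p μ * lpNorm g q μ * μ.real S ^ (1 - s.toReal⁻¹)
          + lpNorm f p μ * μ.real S ^ (1 - s.toReal⁻¹) * lpNorm g q μ := by
        gcongr
        exact (abs_nonneg _).trans h_left
    _ = 2 * (lpNorm f p μ * lpNorm g q μ) * μ.real S ^ (1 - s.toReal⁻¹) := by ring

end Covariance

/-- `AlphaMixingLE μ m₁ m₂ a` says that the `α`-mixing coefficient of the σ-algebras `m₁` and `m₂`
is at most `a`. It is stated as a bound on all pairs of events rather than through the supremum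
defining the coefficient. -/
def AlphaMixingLE {Ω : Type*} {_ : MeasurableSpace Ω} (μ : Measure Ω)
    (m₁ m₂ : MeasurableSpace Ω) (a : ℝ) : Prop :=
  ∀ A B : Set Ω, MeasurableSet[m₁] A → MeasurableSet[m₂] B →
    |μ.real (A ∩ B) - μ.real A * μ.real B| ≤ a

namespace AlphaMixingLE

variable {Ω : Type*} {m₁ m₂ mΩ : MeasurableSpace Ω} {μ : Measure Ω} {a : ℝ}

lemma nonneg (hα : AlphaMixingLE μ m₁ m₂ a) : 0 ≤ a :=
  (abs_nonneg _).trans (hα ∅ ∅ (@MeasurableSet.empty _ m₁) (@MeasurableSet.empty _ m₂))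

lemma mono (hα : AlphaMixingLE μ m₁ m₂ a) {b : ℝ} (hab : a ≤ b) : AlphaMixingLE μ m₁ m₂ b :=
  fun A B hA hB ↦ (hα A B hA hB).trans hab

variable [IsProbabilityMeasure μ] {f g : Ω → ℝ}

lemma abs_covariance_le_of_bounded (hα : AlphaMixingLE μ m₁ m₂ a) (hm₁ : m₁ ≤ mΩ) (hm₂ : m₂ ≤ mΩ)
    (hf : Measurable[m₁] f) (hg : Measurable[m₂] g) {M N : ℝ} (hM : ∀ ω, |f ω| ≤ M)
    (hN : ∀ ω, |g ω| ≤ N) :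
    |cov[f, g; μ]| ≤ 4 * (M * N) * a := by
  obtain ⟨ω₀⟩ : Nonempty Ω := μ.nonempty_of_neZero
  have hM₀ : 0 ≤ M := (abs_nonneg _).trans (hM ω₀)
  have hN₀ : 0 ≤ N := (abs_nonneg _).trans (hN ω₀)
  have hg_int : Integrable g μ :=
    .of_bound (hg.mono hm₂ le_rfl).aestronglyMeasurable N (.of_forall hN)
  obtain ⟨A, hA, hfA⟩ := exists_abs_covariance_le_mul_covariance_indicator hm₁ hf hM hg_int
  obtain ⟨B, hB, hgB⟩ := exists_abs_covariance_le_mul_covariance_indicator hm₂ hg hN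
    (g := A.indicator 1) ((integrable_const (μ := μ) 1).indicator (hm₁ A hA))
  have h_event : cov[B.indicator 1, A.indicator 1; μ] ≤ a := by
    rw [covariance_comm, covariance_indicator_one_indicator_one (hm₁ A hA) (hm₂ B hB)]
    exact (le_abs_self _).trans (hα A B hA hB)
  calc |cov[f, g; μ]|
    _ ≤ 2 * M * cov[A.indicator 1, g; μ] := hfA
    _ ≤ 2 * M * |cov[g, A.indicator 1; μ]| := by
        rw [covariance_comm]
        gcongr
        exact le_abs_self _
    _ ≤ 2 * M * (2 * N * cov[B.indicator 1, A.indicator 1; μ]) := by gcongr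
    _ ≤ 2 * M * (2 * N * a) := by gcongr
    _ = 4 * (M * N) * a := by ring

variable {p q s : ENNReal} [p.HolderTriple q s]

lemma abs_covariance_truncation_le (hα : AlphaMixingLE μ m₁ m₂ a) (ha : 0 < a) (hm₁ : m₁ ≤ mΩ)
    (hm₂ : m₂ ≤ mΩ) (hs : 1 ≤ s) (hf : Measurable[m₁] f) (hg : Measurable[m₂] g) {K L : ℝ}
    (hK : 0 ≤ K) (hL : 0 ≤ L) :
    |cov[{ω | K * a ^ (-p.toReal⁻¹) < |f ω|}ᶜ.indicator f,
        {ω | L * a ^ (-q.toReal⁻¹) < |g ω|}ᶜ.indicator g; μ]|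
      ≤ 4 * (K * L) * a ^ (1 - s.toReal⁻¹) := by
  set M := K * a ^ (-p.toReal⁻¹)
  set N := L * a ^ (-q.toReal⁻¹)
  have hS : MeasurableSet[m₁] {ω | M < |f ω|} := (measurable_abs.comp hf) measurableSet_Ioi
  have hT : MeasurableSet[m₂] {ω | N < |g ω|} := (measurable_abs.comp hg) measurableSet_Ioi
  calc |cov[{ω | M < |f ω|}ᶜ.indicator f, {ω | N < |g ω|}ᶜ.indicator g; μ]|
    _ ≤ 4 * (M * N) * a :=
        hα.abs_covariance_le_of_bounded hm₁ hm₂ (hf.indicator hS.compl) (hg.indicator hT.compl)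
          (abs_indicator_compl_lt_abs_le (by positivity))
          (abs_indicator_compl_lt_abs_le (by positivity))
    _ = 4 * (K * L) * (a ^ (-p.toReal⁻¹) * a ^ (-q.toReal⁻¹) * a ^ (1 : ℝ)) := by
        rw [Real.rpow_one]
        ring
    _ = 4 * (K * L) * a ^ (1 - s.toReal⁻¹) := by
        rw [← Real.rpow_add ha, ← Real.rpow_add ha,
          ← inv_toReal_add_inv_toReal_of_holderTriple (p := p) (q := q) hs]
        ring_nf

lemma abs_covariance_le_of_pos (hα : AlphaMixingLE μ m₁ m₂ a) (ha : 0 < a) (hm₁ : m₁ ≤ mΩ)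
    (hm₂ : m₂ ≤ mΩ) (hs : 1 ≤ s) (hf : Measurable[m₁] f) (hg : Measurable[m₂] g)
    (hfp : MemLp f p μ) (hgq : MemLp g q μ) :
    |cov[f, g; μ]| ≤ 8 * (lpNorm f p μ * lpNorm g q μ) * a ^ (1 - s.toReal⁻¹) := by
  have : q.HolderTriple p s := .symm
  have hp : p ≠ 0 := (zero_lt_one.trans_le (hs.trans (ENNReal.HolderTriple.le p q s))).ne'
  have hq : q ≠ 0 := (zero_lt_one.trans_le (hs.trans (ENNReal.HolderTriple.le q p s))).ne'
  have he : 0 ≤ 1 - s.toReal⁻¹ := one_sub_inv_toReal_nonneg hs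
  have hf₀ : 0 ≤ lpNorm f p μ := lpNorm_nonneg
  have hg₀ : 0 ≤ lpNorm g q μ := lpNorm_nonneg
  set S := {ω | lpNorm f p μ * a ^ (-p.toReal⁻¹) < |f ω|}
  set T := {ω | lpNorm g q μ * a ^ (-q.toReal⁻¹) < |g ω|}
  have hS : MeasurableSet S := hm₁ S ((measurable_abs.comp hf) measurableSet_Ioi)
  have hT : MeasurableSet T := hm₂ T ((measurable_abs.comp hg) measurableSet_Ioi)
  have hμS : μ.real S ≤ a := measureReal_lpNorm_mul_rpow_lt_norm_le hp hfp ha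
  have hμT : μ.real T ≤ a := measureReal_lpNorm_mul_rpow_lt_norm_le hq hgq ha
  have h_tail_left : |cov[S.indicator f, g; μ]|
      ≤ 2 * (lpNorm f p μ * lpNorm g q μ) * a ^ (1 - s.toReal⁻¹) :=
    (abs_covariance_indicator_le hs hS hfp hgq).trans (by gcongr)
  have h_tail_right : |cov[T.indicator g, Sᶜ.indicator f; μ]|
      ≤ 2 * (lpNorm f p μ * lpNorm g q μ) * a ^ (1 - s.toReal⁻¹) := by
    refine (abs_covariance_indicator_le hs hT hgq (hfp.indicator hS.compl)).trans ?_
    rw [mul_comm (lpNorm g q μ)]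
    gcongr
    exact lpNorm_indicator_le hS.compl hfp
  have h_bulk : |cov[Sᶜ.indicator f, Tᶜ.indicator g; μ]|
      ≤ 4 * (lpNorm f p μ * lpNorm g q μ) * a ^ (1 - s.toReal⁻¹) :=
    hα.abs_covariance_truncation_le ha hm₁ hm₂ hs hf hg hf₀ hg₀
  rw [covariance_eq_indicator_add_indicator_add_compl hs hS hT hfp hgq]
  linarith [abs_add_three (cov[S.indicator f, g; μ]) (cov[T.indicator g, Sᶜ.indicator f; μ])
    (cov[Sᶜ.indicator f, Tᶜ.indicator g; μ])]

lemma abs_covariance_le (hα : AlphaMixingLE μ m₁ m₂ a) (hm₁ : m₁ ≤ mΩ)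
    (hm₂ : m₂ ≤ mΩ) (hs : 1 ≤ s) (hf : Measurable[m₁] f) (hg : Measurable[m₂] g)
    (hfp : MemLp f p μ) (hgq : MemLp g q μ) :
    |cov[f, g; μ]| ≤ 8 * (lpNorm f p μ * lpNorm g q μ) * a ^ (1 - s.toReal⁻¹) := by
  have h_cont : Continuous fun b : ℝ ↦ 8 * (lpNorm f p μ * lpNorm g q μ) * b ^ (1 - s.toReal⁻¹) :=
    continuous_const.mul (Real.continuous_rpow_const (one_sub_inv_toReal_nonneg hs))
  refine ge_of_tendsto (x := nhdsWithin a (Set.Ioi a))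
    ((h_cont.tendsto a).mono_left nhdsWithin_le_nhds) ?_
  filter_upwards [self_mem_nhdsWithin] with b hb
  exact (hα.mono hb.le).abs_covariance_le_of_pos (hα.nonneg.trans_lt hb) hm₁ hm₂ hs hf hg hfp hgq

end AlphaMixingLE

theorem stmt9_general {Ω : Type*} {m₁ m₂ mΩ : MeasurableSpace Ω} {μ : Measure Ω} {a : ℝ}
    [IsProbabilityMeasure μ] (hα : AlphaMixingLE μ m₁ m₂ a)
    (hm₁ : m₁ ≤ mΩ) (hm₂ : m₂ ≤ mΩ) {f g : Ω → ℝ} (hf : Measurable[m₁] f)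
    (hg : Measurable[m₂] g) {q r : ℝ} (hq : 0 < q) (hr : 0 < r) (hqr : 1 / q + 1 / r ≤ 1)
    (hfq : Integrable (fun ω ↦ |f ω| ^ q) μ) (hgr : Integrable (fun ω ↦ |g ω| ^ r) μ) :
    |(∫ ω, f ω * g ω ∂μ) - (∫ ω, f ω ∂μ) * ∫ ω, g ω ∂μ| ≤
      8 * (∫ ω, |f ω| ^ q ∂μ) ^ (1 / q) * (∫ ω, |g ω| ^ r ∂μ) ^ (1 / r) *
        a ^ (1 - 1 / q - 1 / r) := by
  have holder : (ENNReal.ofReal q).HolderTriple (ENNReal.ofReal r)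
      (ENNReal.ofReal (q⁻¹ + r⁻¹)⁻¹) :=
    (Real.HolderTriple.of_pos hq hr).ennrealOfReal
  have hs : 1 ≤ ENNReal.ofReal (q⁻¹ + r⁻¹)⁻¹ := by
    rw [ENNReal.one_le_ofReal]
    exact (one_le_inv₀ (by positivity)).mpr (by simpa only [one_div] using hqr)
  have hf' := (hf.mono hm₁ le_rfl).aestronglyMeasurable (μ := μ)
  have hg' := (hg.mono hm₂ le_rfl).aestronglyMeasurable (μ := μ)
  have hfp := memLp_ofReal_of_integrable_abs_rpow hq hf' hfq
  have hgp := memLp_ofReal_of_integrable_abs_rpow hr hg' hgr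
  have h_exponent : 1 - (ENNReal.ofReal (q⁻¹ + r⁻¹)⁻¹).toReal⁻¹ = 1 - 1 / q - 1 / r := by
    rw [ENNReal.toReal_ofReal (by positivity), inv_inv, one_div, one_div, sub_sub]
  have h_main := hα.abs_covariance_le hm₁ hm₂ hs hf hg hfp hgp
  rwa [covariance_eq_integral_mul_sub_of_holderTriple hs hfp hgp, h_exponent,
    lpNorm_ofReal_eq_integral_abs_rpow hq hf', lpNorm_ofReal_eq_integral_abs_rpow hr hg',
    ← mul_assoc] at h_main

/-- Davydov's covariance inequality for an α-mixing process. -/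
theorem stmt9 {Ω : Type*} [mΩ : MeasurableSpace Ω] (μ : Measure Ω) [IsProbabilityMeasure μ]
    (ξt : ℤ → Ω → ℝ) (hξt : ∀ s, Measurable (ξt s))
    (k : ℤ) (hk : 1 ≤ k) (αk : ℝ)
    (mpast mfut : MeasurableSpace Ω)
    (hmpast : mpast = ⨆ (s : ℤ) (_ : s ≤ 0), MeasurableSpace.comap (ξt s) inferInstance)
    (hmfut : mfut = ⨆ (s : ℤ) (_ : k ≤ s), MeasurableSpace.comap (ξt s) inferInstance)
    (hα : ∀ A B : Set Ω, MeasurableSet[mpast] A → MeasurableSet[mfut] B →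
      |(μ (A ∩ B)).toReal - (μ A).toReal * (μ B).toReal| ≤ αk)
    (ξ η : Ω → ℝ) (hξ : Measurable[mpast] ξ) (hη : Measurable[mfut] η)
    (q r : ℝ) (hq : 1 < q) (hr : 1 < r) (hqr : 1 / q + 1 / r < 1)
    (hξq : Integrable (fun ω => |ξ ω| ^ q) μ)
    (hηr : Integrable (fun ω => |η ω| ^ r) μ) :
    |(∫ ω, ξ ω * η ω ∂μ) - (∫ ω, ξ ω ∂μ) * ∫ ω, η ω ∂μ| ≤
      12 * (∫ ω, |ξ ω| ^ q ∂μ) ^ (1 / q) * (∫ ω, |η ω| ^ r ∂μ) ^ (1 / r) *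
        αk ^ (1 - 1 / q - 1 / r) := by
  have hmpast_le : mpast ≤ mΩ := hmpast ▸ iSup₂_le fun s _ ↦ (hξt s).comap_le
  have hmfut_le : mfut ≤ mΩ := hmfut ▸ iSup₂_le fun s _ ↦ (hξt s).comap_le
  have hα_le : AlphaMixingLE μ mpast mfut αk := hα
  have := hα_le.nonneg
  refine (stmt9_general hα_le hmpast_le hmfut_le hξ hη (by linarith) (by linarith) hqr.le hξq
    hηr).trans ?_
  gcongr
  norm_num
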